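/- The 8×8 symbol matrix of the first-order error evolution system (in Fourier variable k ∈ ℝ³), namely the linear map sending (K̂_B, K̂_E, D̂_B, D̂_E) to (ic k × K̂_E + ic k D̂_E, −ic k × K̂_B − ic k D̂_B, −ic k · K̂_E, ic k · K̂_B), has characteristic polynomial (λ² + c²|k|²)⁴; i.e., its eigenvalues are ±ic|k|, each with algebraic multiplicity four. -/

import Mathlib

noncomputable section
open Polynomial

/-- the 8×8 Fourier symbol matrix of the error evolution system, acting on
(K̂_B, K̂_E, D̂_B, D̂_E) ∈ ℂ³ × ℂ³ × ℂ × ℂ (coordinates 0-2, 3-5, 6, 7). -/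
def errorSymbol (c : ℝ) (k : Fin 3 → ℝ) : Matrix (Fin 8) (Fin 8) ℂ :=
  let e : ℂ := Complex.I * c
  let k0 : ℂ := k 0
  let k1 : ℂ := k 1
  let k2 : ℂ := k 2
  !![0, 0, 0, 0, -e*k2, e*k1, 0, e*k0;
     0, 0, 0, e*k2, 0, -e*k0, 0, e*k1;
     0, 0, 0, -e*k1, e*k0, 0, 0, e*k2;
     0, e*k2, -e*k1, 0, 0, 0, -e*k0, 0;
     -e*k2, 0, e*k0, 0, 0, 0, -e*k1, 0;
     e*k1, -e*k0, 0, 0, 0, 0, -e*k2, 0;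
     0, 0, 0, -e*k0, -e*k1, -e*k2, 0, 0;
     e*k0, e*k1, e*k2, 0, 0, 0, 0, 0]

/-- the off-diagonal 4×4 block -/
def offBlock (a b d : ℂ) : Matrix (Fin 4) (Fin 4) ℂ :=
  !![0, -d, b, a; d, 0, -a, b; -b, a, 0, d; -a, -b, -d, 0]

lemma offBlock_sq (a b d : ℂ) :
    offBlock a b d * offBlock a b d = (-(a ^ 2 + b ^ 2 + d ^ 2)) • (1 : Matrix (Fin 4) (Fin 4) ℂ) := by
  ext i j
  fin_cases i <;> fin_cases j <;>
    simp [offBlock, Matrix.mul_apply, Fin.sum_univ_four] <;> ring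

/-- splitting of the coordinates in (K_B, D_B) and (K_E, D_E) -/
def splitFun : Fin 4 ⊕ Fin 4 → Fin 8 :=
  Sum.elim ![0, 1, 2, 6] ![3, 4, 5, 7]

lemma splitFun_bij : Function.Bijective splitFun := by
  unfold splitFun
  decide

/-- the block matrix [[x, -Q], [Q, x]] -/
def blk {R : Type*} [CommRing R] (Q : Matrix (Fin 4) (Fin 4) R) (x : R) :
    Matrix (Fin 4 ⊕ Fin 4) (Fin 4 ⊕ Fin 4) R :=
  Matrix.fromBlocks (x • 1) (-Q) Q (x • 1)

lemma block_det {R : Type*} [CommRing R] (Q : Matrix (Fin 4) (Fin 4) R) (x t : R)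
    (hQ : Q * Q = t • (1 : Matrix (Fin 4) (Fin 4) R)) :
    (blk Q x).det * x ^ 4 = (x ^ 2 + t) ^ 4 * x ^ 4 := by
  have h11 : (x • (1 : Matrix (Fin 4) (Fin 4) R)) * (x • 1) + (-Q) * (-Q)
      = (x ^ 2 + t) • 1 := by
    rw [neg_mul_neg, hQ, add_smul, smul_mul_smul_comm, one_mul, pow_two]
  have h21 : Q * (x • 1) + (x • (1 : Matrix (Fin 4) (Fin 4) R)) * (-Q) = 0 := by
    simp
  have hmul : blk Q x
      * Matrix.fromBlocks (x • 1) 0 (-Q) 1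
      = Matrix.fromBlocks ((x ^ 2 + t) • 1) (-Q) 0 (x • 1) := by
    rw [blk, Matrix.fromBlocks_multiply, h11, h21]
    simp only [mul_zero, mul_one, zero_add]
  have hdet := congrArg Matrix.det hmul
  rw [Matrix.det_mul, Matrix.det_fromBlocks_zero₁₂, Matrix.det_fromBlocks_zero₂₁] at hdet
  simpa only [Matrix.det_smul, Matrix.det_one, mul_one, Fintype.card_fin] using hdet

lemma block_det' {R : Type*} [CommRing R] [IsDomain R] (Q : Matrix (Fin 4) (Fin 4) R) (x t : R)
    (hx : x ≠ 0) (hQ : Q * Q = t • (1 : Matrix (Fin 4) (Fin 4) R)) :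
    (blk Q x).det = (x ^ 2 + t) ^ 4 :=
  mul_right_cancel₀ (pow_ne_zero 4 hx) (block_det Q x t hQ)

lemma map_sq {R S : Type*} [CommRing R] [CommRing S] (f : R →+* S) (P : Matrix (Fin 4) (Fin 4) R)
    (s : R) (hP : P * P = s • (1 : Matrix (Fin 4) (Fin 4) R)) :
    P.map f * P.map f = (f s) • (1 : Matrix (Fin 4) (Fin 4) S) := by
  rw [← Matrix.map_mul, hP]
  ext1 i j
  by_cases h : i = j <;> simp [h]

lemma block_charmatrix {R : Type*} [CommRing R] (P : Matrix (Fin 4) (Fin 4) R) :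
    (Matrix.fromBlocks 0 P (-P) 0).charmatrix = blk (P.map C) X := by
  rw [blk, Matrix.charmatrix_fromBlocks]
  congr 1
  · ext1 i j
    by_cases h : i = j <;> simp [Matrix.charmatrix_apply, Matrix.one_apply, h]
  · ext1 i j
    simp
  · ext1 i j
    by_cases h : i = j <;> simp [Matrix.charmatrix_apply, Matrix.one_apply, h]

lemma block_charpoly {R : Type*} [CommRing R] [IsDomain R] (P : Matrix (Fin 4) (Fin 4) R) (s : R)
    (hP : P * P = s • (1 : Matrix (Fin 4) (Fin 4) R)) :
    (Matrix.fromBlocks 0 P (-P) 0).charpoly = (X ^ 2 + C s) ^ 4 := by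
  rw [Matrix.charpoly, block_charmatrix]
  exact block_det' _ _ _ X_ne_zero (map_sq C P s hP)

/-- the characteristic polynomial of the 8×8 symbol is
(λ² + c²|k|²)⁴, i.e. the eigenvalues are ±ic|k|, each with algebraic
multiplicity four. -/
theorem stmt_4 (c : ℝ) (hc : 0 < c) (k : Fin 3 → ℝ) :
    (errorSymbol c k).charpoly
      = (X ^ 2 + C ((c ^ 2 * (k 0 ^ 2 + k 1 ^ 2 + k 2 ^ 2) : ℝ) : ℂ)) ^ 4 := by
  have hM : Matrix.reindex (Equiv.ofBijective splitFun splitFun_bij).symm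
      (Equiv.ofBijective splitFun splitFun_bij).symm (errorSymbol c k)
      = Matrix.fromBlocks 0
          (offBlock (Complex.I * c * k 0) (Complex.I * c * k 1) (Complex.I * c * k 2))
          (-offBlock (Complex.I * c * k 0) (Complex.I * c * k 1) (Complex.I * c * k 2)) 0 := by
    ext i j
    rcases i with i | i <;> rcases j with j | j <;> fin_cases i <;> fin_cases j <;>
      simp [errorSymbol, offBlock, splitFun]
  rw [← Matrix.charpoly_reindex (Equiv.ofBijective splitFun splitFun_bij).symm, hM,
    block_charpoly _ _ (offBlock_sq _ _ _)]
  congr 3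
  push_cast
  simp only [mul_pow, Complex.I_sq]
  ring
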